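/- Let 𝔥 ⊆ so(r,s) be a subalgebra satisfying one of the following conditions: (i) 𝔥 is a proper subalgebra of so(r,s) acting irreducibly on ℝ^{r,s}; (ii) 𝔥 preserves a proper nondegenerate subspace of ℝ^{r,s}; (iii) the form is definite (s = 0 or r = 0) and 𝔥 is an arbitrary proper subalgebra of so(n) where n = r + s. Then the first prolongation (𝔥 ⊕ ℝ·id_{ℝ^{r,s}})^{(1)} is zero. -/

import Mathlib

/-!
Let `φ` be in the first prolongation of `𝔤 ⊕ ℝ·id` with `𝔤 ⊆ so(B)`, and write
`φ X = c X • 1 + A X` with `A X ∈ 𝔤`. The usual permutation argument that makes a metric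
connection unique expresses `A` through `c`, and nondegeneracy produces a vector `T` with
`c X = B(T, X)` and `A X = T ∧ X`. So the prolongation is governed by the space `K` of vectors `T`
with `T ∧ V ⊆ 𝔤`. If `𝔤 = 𝔥` is a subalgebra, then `[A, T ∧ X] = AT ∧ X + T ∧ AX` shows that `K`
is `𝔥`-invariant. If `K = V`, then `𝔥` contains all `X ∧ Y`, which span `so(B)`. If on the other
hand `𝔥` preserves a proper nondegenerate subspace `W`, then evaluating `T ∧ X` on `W`, first for
`X ⊥ W` and then for arbitrary `X`, gives `T ⊥ W` and `T ∈ W`, so `T = 0`; in the definite case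
this applies to `W = K` itself.
-/

open Module

noncomputable section

namespace Weyl

variable {V : Type*} [AddCommGroup V] [Module ℝ V]

/-- The endomorphism `X ∧ Y : Z ↦ B(X,Z)•Y − B(Y,Z)•X`. -/
def wedge (B : LinearMap.BilinForm ℝ V) (X Y : V) : Module.End ℝ V where
  toFun Z := B X Z • Y - B Y Z • X
  map_add' z z' := by simp only [map_add, add_smul]; abel
  map_smul' c z := by simp only [map_smul, smul_eq_mul, RingHom.id_apply, mul_smul, smul_sub]

/-- The Lie algebra `so(B)` of endomorphisms skew-symmetric with respect to `B`. -/
def soSet (B : LinearMap.BilinForm ℝ V) : Set (Module.End ℝ V) :=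
  {A | ∀ x y, B (A x) y + B x (A y) = 0}

/-- The conformal Lie algebra `co(B) = ℝ·id ⊕ so(B)`. -/
def coSet (B : LinearMap.BilinForm ℝ V) : Set (Module.End ℝ V) :=
  {F | ∃ c : ℝ, ∃ S ∈ soSet B, F = c • (1 : Module.End ℝ V) + S}

/-- The first prolongation `g^{(1)}` of a set of endomorphisms:
linear maps `φ : V → g` with `φ(X)Y = φ(Y)X`. -/
def firstProlong (g : Set (Module.End ℝ V)) : Set (V →ₗ[ℝ] Module.End ℝ V) :=
  {φ | (∀ x, φ x ∈ g) ∧ ∀ x y, φ x y = φ y x}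

/-- `R` is an algebraic curvature tensor of type `g` (a linear map on `Λ²V`,
encoded as an antisymmetric bilinear map, with values in `g`, satisfying the
Bianchi identity). -/
def IsCurv (g : Set (Module.End ℝ V)) (R : V →ₗ[ℝ] V →ₗ[ℝ] Module.End ℝ V) : Prop :=
  (∀ x y, R x y = - R y x) ∧ (∀ x y, R x y ∈ g) ∧
    ∀ x y z, R x y z + R y z x + R z x y = 0

/-- `L(ℛ(g))`: the span of all values of algebraic curvature tensors of type `g`. -/
def curvSpan (g : Set (Module.End ℝ V)) : Submodule ℝ (Module.End ℝ V) :=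
  Submodule.span ℝ {F | ∃ R, IsCurv g R ∧ ∃ x y, F = R x y}

/-- `g` is a Berger algebra: `L(ℛ(g)) = g`. -/
def IsBerger (g : Set (Module.End ℝ V)) : Prop :=
  (curvSpan g : Set (Module.End ℝ V)) = g

/-- `g` is (the underlying set of) a Lie subalgebra of `gl(V)`. -/
def IsLieSub (g : Set (Module.End ℝ V)) : Prop :=
  (0 : Module.End ℝ V) ∈ g ∧ (∀ F ∈ g, ∀ F' ∈ g, F + F' ∈ g) ∧
    (∀ (c : ℝ), ∀ F ∈ g, c • F ∈ g) ∧ ∀ F ∈ g, ∀ F' ∈ g, F * F' - F' * F ∈ g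

/-- The subspace `W` is invariant under every element of `g`. -/
def Invariant (g : Set (Module.End ℝ V)) (W : Submodule ℝ V) : Prop :=
  ∀ F ∈ g, ∀ x ∈ W, F x ∈ W

/-- The restriction of `B` to `W` is nondegenerate. -/
def IsNondegOn (B : LinearMap.BilinForm ℝ V) (W : Submodule ℝ V) : Prop :=
  ∀ x ∈ W, (∀ y ∈ W, B x y = 0) → x = 0

/-- Weak irreducibility: no proper nonzero invariant nondegenerate subspace. -/
def WeaklyIrred (B : LinearMap.BilinForm ℝ V) (g : Set (Module.End ℝ V)) : Prop :=
  ∀ W : Submodule ℝ V, Invariant g W → IsNondegOn B W → W = ⊥ ∨ W = ⊤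

/-- Irreducibility: no proper nonzero invariant subspace. -/
def Irred (g : Set (Module.End ℝ V)) : Prop :=
  ∀ W : Submodule ℝ V, Invariant g W → W = ⊥ ∨ W = ⊤

/-- The standard nondegenerate symmetric bilinear form of signature `(r,s)` on
`ℝ^{r,s} = Fin (r+s) → ℝ` (the first `r` coordinates are timelike). -/
def psForm (r s : ℕ) : LinearMap.BilinForm ℝ (Fin (r + s) → ℝ) :=
  LinearMap.mk₂ ℝ
    (fun x y => ∑ i : Fin (r + s), (if (i : ℕ) < r then (-1 : ℝ) else 1) * (x i * y i))
    (fun x x' y => by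
      simp only [Pi.add_apply, add_mul, mul_add, Finset.sum_add_distrib])
    (fun c x y => by
      simp only [Pi.smul_apply, smul_eq_mul, Finset.mul_sum]
      exact Finset.sum_congr rfl fun i _ => by ring)
    (fun x y y' => by
      simp only [Pi.add_apply, add_mul, mul_add, Finset.sum_add_distrib])
    (fun c x y => by
      simp only [Pi.smul_apply, smul_eq_mul, Finset.mul_sum]
      exact Finset.sum_congr rfl fun i _ => by ring)

/-- The extension `𝔤 + ℝ·id` of a set `𝔤` of endomorphisms by the homotheties; `coSet B` is the case
`𝔤 = so(B)`. -/
def addScalars (g : Set (Module.End ℝ V)) : Set (Module.End ℝ V) :=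
  {F | ∃ c : ℝ, ∃ A ∈ g, F = c • (1 : Module.End ℝ V) + A}

section Wedge

variable (B : LinearMap.BilinForm ℝ V)

@[simp]
theorem wedge_apply (X Y Z : V) : wedge B X Y Z = B X Z • Y - B Y Z • X := rfl

theorem wedge_zero_left (X : V) : wedge B 0 X = 0 := by
  ext Z
  simp

theorem wedge_add_left (S T X : V) : wedge B (S + T) X = wedge B S X + wedge B T X := by
  ext Z
  simp only [wedge_apply, LinearMap.add_apply, map_add]
  module

theorem wedge_smul_left (a : ℝ) (T X : V) : wedge B (a • T) X = a • wedge B T X := by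
  ext Z
  simp only [wedge_apply, LinearMap.smul_apply, map_smul, smul_eq_mul]
  module

/-- The space of vectors `T` with `T ∧ V ⊆ 𝔤`. It parametrizes the first prolongation of
`𝔤 ⊕ ℝ·id` when `𝔤 ⊆ so(B)`. -/
def wedgeCore (𝔤 : Submodule ℝ (Module.End ℝ V)) : Submodule ℝ V where
  carrier := {T | ∀ X, wedge B T X ∈ 𝔤}
  zero_mem' X := by rw [wedge_zero_left]; exact 𝔤.zero_mem
  add_mem' hS hT X := by rw [wedge_add_left]; exact 𝔤.add_mem (hS X) (hT X)
  smul_mem' a _ hT X := by rw [wedge_smul_left]; exact 𝔤.smul_mem a (hT X)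

end Wedge

variable {B : LinearMap.BilinForm ℝ V}

theorem mem_soSet_iff {A : Module.End ℝ V} :
    A ∈ soSet B ↔ ∀ x y, B (A x) y = -B x (A y) :=
  forall₂_congr fun _ _ => add_eq_zero_iff_eq_neg

theorem lie_wedge {A : Module.End ℝ V} (hA : A ∈ soSet B) (T X : V) :
    ⁅A, wedge B T X⁆ = wedge B (A T) X + wedge B T (A X) := by
  ext Z
  simp only [Ring.lie_def, Module.End.mul_apply, LinearMap.sub_apply,
    LinearMap.add_apply, wedge_apply, map_sub, map_smul, mem_soSet_iff.mp hA]
  module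

theorem sum_wedge_dualBasis_eq_two_smul {ι : Type*} [Fintype ι] [DecidableEq ι] (hsymm : B.IsSymm)
    (hB : B.Nondegenerate) (b : Basis ι ℝ V) {A : Module.End ℝ V} (hA : A ∈ soSet B) :
    ∑ i, wedge B (B.dualBasis hB b i) (A (b i)) = (2 : ℝ) • A := by
  ext Z
  have expand_basis : ∑ i, B (B.dualBasis hB b i) Z • b i = Z := by
    have repr_eq (i : ι) : b.repr Z i = B (B.dualBasis hB b i) Z := by
      rw [hsymm.eq, ← LinearMap.BilinForm.dualBasis_repr_apply hB,
        LinearMap.BilinForm.dualBasis_dualBasis hB hsymm]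
    simpa only [repr_eq] using b.sum_repr Z
  have expand_dualBasis : ∑ i, B (b i) (A Z) • B.dualBasis hB b i = A Z := by
    simpa [hsymm.eq (A Z)] using (B.dualBasis hB b).sum_repr (A Z)
  calc (∑ i, wedge B (B.dualBasis hB b i) (A (b i))) Z
      = A (∑ i, B (B.dualBasis hB b i) Z • b i) + ∑ i, B (b i) (A Z) • B.dualBasis hB b i := by
        simp [mem_soSet_iff.mp hA, Finset.sum_add_distrib]
    _ = ((2 : ℝ) • A) Z := by
        rw [expand_basis, expand_dualBasis, LinearMap.smul_apply, two_smul]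

theorem soSet_subset_of_wedgeCore_eq_top [FiniteDimensional ℝ V] (hsymm : B.IsSymm)
    (hB : B.Nondegenerate) {𝔤 : Submodule ℝ (Module.End ℝ V)} (htop : wedgeCore B 𝔤 = ⊤) :
    soSet B ⊆ (𝔤 : Set (Module.End ℝ V)) := by
  intro A hA
  have wedge_mem (T X : V) : wedge B T X ∈ 𝔤 := (htop ▸ Submodule.mem_top : T ∈ wedgeCore B 𝔤) X
  rw [SetLike.mem_coe, ← 𝔤.smul_mem_iff (two_ne_zero' ℝ),
    ← sum_wedge_dualBasis_eq_two_smul hsymm hB (finBasis ℝ V) hA]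
  exact 𝔤.sum_mem fun i _ => wedge_mem _ _

section InvariantSubspace

variable {g : Set (Module.End ℝ V)} {W : Submodule ℝ V} {T : V}

theorem IsNondegOn.restrict_nondegenerate (hsymm : B.IsSymm) (hW : IsNondegOn B W) :
    (B.restrict W).Nondegenerate :=
  (hsymm.isRefl.domRestrict W).nondegenerate_iff_separatingLeft.mpr fun x hx =>
    Subtype.ext <| hW x x.2 fun y hy => hx ⟨y, hy⟩

theorem isNondegOn_of_anisotropic (hB : B.toQuadraticMap.Anisotropic) (W : Submodule ℝ V) :
    IsNondegOn B W :=
  fun x hx hxW => hB x (hxW x hx)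

theorem apply_eq_zero_of_forall_wedge_mem (hsymm : B.IsSymm) (hinv : Invariant g W)
    (hW : IsNondegOn B W) (horth : B.orthogonal W ≠ ⊥) (hT : ∀ X, wedge B T X ∈ g)
    {w : V} (hw : w ∈ W) : B T w = 0 := by
  obtain ⟨X, hX, hX0⟩ := Submodule.exists_mem_ne_zero_of_ne_bot horth
  have apply_X {y : V} (hy : y ∈ W) : B X y = 0 := by rw [hsymm.eq]; exact hX y hy
  have smul_X_mem : B T w • X ∈ W := by simpa [apply_X hw] using hinv _ (hT X) w hw
  have smul_X_eq_zero : B T w • X = 0 := hW _ smul_X_mem fun y hy => by simp [apply_X hy]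
  exact (smul_eq_zero.mp smul_X_eq_zero).resolve_right hX0

theorem mem_of_forall_wedge_mem (hB : B.SeparatingRight) (hinv : Invariant g W) (hbot : W ≠ ⊥)
    (hT : ∀ X, wedge B T X ∈ g) (hTW : ∀ w ∈ W, B T w = 0) : T ∈ W := by
  obtain ⟨w, hw, hw0⟩ := Submodule.exists_mem_ne_zero_of_ne_bot hbot
  obtain ⟨X, hX⟩ : ∃ X, B X w ≠ 0 := not_forall.mp fun h => hw0 (hB w h)
  have smul_T_mem : B X w • T ∈ W := by simpa [hTW w hw] using hinv _ (hT X) w hw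
  exact (W.smul_mem_iff hX).mp smul_T_mem

theorem wedgeCore_eq_bot_of_invariant [FiniteDimensional ℝ V]
    {𝔤 : Submodule ℝ (Module.End ℝ V)} (hsymm : B.IsSymm) (hB : B.Nondegenerate)
    (hinv : Invariant (𝔤 : Set (Module.End ℝ V)) W) (hW : IsNondegOn B W) (hbot : W ≠ ⊥)
    (htop : W ≠ ⊤) : wedgeCore B 𝔤 = ⊥ := by
  have horth : B.orthogonal W ≠ ⊥ := fun h => htop <|
    LinearMap.BilinForm.eq_top_of_restrict_nondegenerate_of_orthogonal_eq_bot hsymm.isRefl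
      (hW.restrict_nondegenerate hsymm) h
  refine (Submodule.eq_bot_iff _).mpr fun T hT => ?_
  have hTW : ∀ w ∈ W, B T w = 0 := fun w hw =>
    apply_eq_zero_of_forall_wedge_mem hsymm hinv hW horth hT hw
  exact hW T (mem_of_forall_wedge_mem hB.2 hinv hbot hT hTW) hTW

end InvariantSubspace

section Prolongation

theorem koszul_formula {c : V → ℝ} {A : V → Module.End ℝ V} (hsymm : B.IsSymm)
    (hA : ∀ x, A x ∈ soSet B) (hcA : ∀ x y, c x • y + A x y = c y • x + A y x) (x y z : V) :
    B (A x y) z = c y * B x z - c z * B x y := by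
  have skew (u v w : V) : B (A u v) w + B (A u w) v = 0 := by
    simpa only [hsymm.eq v] using hA u v w
  have exchange (u v w : V) : c u * B v w + B (A u v) w = c v * B u w + B (A v u) w := by
    simpa using congrArg (B · w) (hcA u v)
  linear_combination
    (exchange x y z - exchange x z y - exchange y z x + skew x y z + skew y x z - skew z x y) / 2
      - c x / 2 * hsymm.eq y z - c y / 2 * hsymm.eq x z + c z / 2 * hsymm.eq x y

theorem exists_eq_wedge [Nontrivial V] {c : V → ℝ} {A : V → Module.End ℝ V} (hsymm : B.IsSymm)
    (hB : B.SeparatingLeft) (hA : ∀ x, A x ∈ soSet B)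
    (hcA : ∀ x y, c x • y + A x y = c y • x + A y x) :
    ∃ T, ∀ x, c x = B T x ∧ A x = wedge B T x := by
  obtain ⟨u, hu⟩ := exists_ne (0 : V)
  obtain ⟨v, huv⟩ : ∃ v, B u v ≠ 0 := not_forall.mp fun h => hu (hB u h)
  have koszul := koszul_formula hsymm hA hcA
  -- `koszul u v` says that `c v • u - A u v` represents the functional `B u v • c`.
  let T := (B u v)⁻¹ • (c v • u - A u v)
  have hT (x : V) : c x = B T x := by
    simp [T, koszul, field]
  refine ⟨T, fun x => ⟨hT x, LinearMap.ext fun y => sub_eq_zero.mp <| hB _ fun z => ?_⟩⟩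
  simp only [map_sub, map_smul, LinearMap.sub_apply, LinearMap.smul_apply, wedge_apply,
    smul_eq_mul, koszul, ← hT]
  ring

theorem exists_eq_smul_one_add_wedge {g : Set (Module.End ℝ V)} {φ : V →ₗ[ℝ] Module.End ℝ V}
    (hsymm : B.IsSymm) (hB : B.SeparatingLeft) (hso : g ⊆ soSet B)
    (hφ : φ ∈ firstProlong (addScalars g)) :
    ∃ T, ∀ X, wedge B T X ∈ g ∧ φ X = B T X • (1 : Module.End ℝ V) + wedge B T X := by
  choose c A hA hcA using hφ.1
  cases subsingleton_or_nontrivial V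
  · exact ⟨0, fun X => ⟨Subsingleton.elim (A X) (wedge B 0 X) ▸ hA X, Subsingleton.elim _ _⟩⟩
  · have exchange (x y : V) : c x • y + A x y = c y • x + A y x := by
      simpa [hcA] using hφ.2 x y
    obtain ⟨T, hT⟩ := exists_eq_wedge hsymm hB (fun x => hso (hA x)) exchange
    exact ⟨T, fun X => ⟨(hT X).2 ▸ hA X, by rw [← (hT X).1, ← (hT X).2, hcA]⟩⟩

theorem firstProlong_addScalars_eq_singleton_zero {𝔤 : Submodule ℝ (Module.End ℝ V)}
    (hsymm : B.IsSymm) (hB : B.SeparatingLeft) (hso : (𝔤 : Set (Module.End ℝ V)) ⊆ soSet B)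
    (hcore : wedgeCore B 𝔤 = ⊥) :
    firstProlong (addScalars (𝔤 : Set (Module.End ℝ V))) = {0} := by
  refine Set.eq_singleton_iff_unique_mem.mpr
    ⟨⟨fun X => ⟨0, 0, 𝔤.zero_mem, by simp⟩, by simp⟩, fun φ hφ => ?_⟩
  obtain ⟨T, hT⟩ := exists_eq_smul_one_add_wedge hsymm hB hso hφ
  have hT0 : T = 0 := (Submodule.eq_bot_iff _).mp hcore T fun X => (hT X).1
  ext X : 1
  simp [(hT X).2, hT0, wedge_zero_left]

end Prolongation

section LieSubalgebra

attribute [local instance] LieRing.ofAssociativeRing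

/-- The bundled Lie subalgebra of `gl(V)` with underlying set `g`. -/
def IsLieSub.toLieSubalgebra {g : Set (Module.End ℝ V)} (hg : IsLieSub g) :
    LieSubalgebra ℝ (Module.End ℝ V) where
  carrier := g
  zero_mem' := hg.1
  add_mem' hF hG := hg.2.1 _ hF _ hG
  smul_mem' c _ hF := hg.2.2.1 c _ hF
  lie_mem' hF hG := hg.2.2.2 _ hF _ hG

theorem invariant_wedgeCore {𝔥 : LieSubalgebra ℝ (Module.End ℝ V)}
    (hso : (𝔥 : Set (Module.End ℝ V)) ⊆ soSet B) :
    Invariant (𝔥 : Set (Module.End ℝ V)) (wedgeCore B 𝔥.toSubmodule) := by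
  intro A hA T hT X
  rw [eq_sub_of_add_eq (lie_wedge (hso hA) T X).symm]
  exact 𝔥.sub_mem (𝔥.lie_mem hA (hT X)) (hT (A X))

theorem first_prolongation_zero_general [FiniteDimensional ℝ V] (hsymm : B.IsSymm)
    (hB : B.Nondegenerate) {𝔥 : LieSubalgebra ℝ (Module.End ℝ V)}
    (hso : (𝔥 : Set (Module.End ℝ V)) ⊆ soSet B)
    (hcond :
      ((𝔥 : Set (Module.End ℝ V)) ≠ soSet B ∧ Irred (𝔥 : Set (Module.End ℝ V))) ∨
      (∃ W : Submodule ℝ V, W ≠ ⊥ ∧ W ≠ ⊤ ∧ IsNondegOn B W ∧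
        Invariant (𝔥 : Set (Module.End ℝ V)) W) ∨
      (B.toQuadraticMap.Anisotropic ∧ (𝔥 : Set (Module.End ℝ V)) ≠ soSet B)) :
    firstProlong (addScalars (𝔥 : Set (Module.End ℝ V))) = {0} := by
  refine firstProlong_addScalars_eq_singleton_zero (𝔤 := 𝔥.toSubmodule) hsymm hB.1 hso ?_
  have hinv := invariant_wedgeCore hso
  have core_ne_top (hproper : (𝔥 : Set (Module.End ℝ V)) ≠ soSet B) :
      wedgeCore B 𝔥.toSubmodule ≠ ⊤ :=
    fun htop => hproper <| hso.antisymm <| soSet_subset_of_wedgeCore_eq_top hsymm hB htop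
  rcases hcond with ⟨hproper, hirr⟩ | ⟨W, hbot, htop, hW, hWinv⟩ | ⟨haniso, hproper⟩
  · exact (hirr _ hinv).resolve_right (core_ne_top hproper)
  · exact wedgeCore_eq_bot_of_invariant hsymm hB hWinv hW hbot htop
  · by_contra hbot
    exact hbot <| wedgeCore_eq_bot_of_invariant hsymm hB hinv (isNondegOn_of_anisotropic haniso _)
      hbot (core_ne_top hproper)

end LieSubalgebra

section StandardForm

variable (r s : ℕ)

theorem psForm_apply (x y : Fin (r + s) → ℝ) :
    psForm r s x y = ∑ i : Fin (r + s), (if (i : ℕ) < r then (-1 : ℝ) else 1) * (x i * y i) := rfl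

theorem psForm_isSymm : (psForm r s).IsSymm :=
  ⟨fun x y => by simp [psForm_apply, mul_comm]⟩

theorem psForm_nondegenerate : (psForm r s).Nondegenerate := by
  refine (psForm_isSymm r s).isRefl.nondegenerate_iff_separatingLeft.mpr ?_
  intro x hx
  ext i
  by_cases hi : (i : ℕ) < r <;> simpa [psForm_apply, Pi.single_apply, hi] using hx (Pi.single i 1)

variable {r s}

theorem psForm_anisotropic_of_definite (hdef : s = 0 ∨ r = 0) :
    (psForm r s).toQuadraticMap.Anisotropic := by
  intro x hx
  have sum_sq : ∑ i, x i * x i = 0 := by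
    rw [LinearMap.BilinMap.toQuadraticMap_apply, psForm_apply] at hx
    rcases hdef with rfl | rfl <;> simpa using hx
  ext i
  simpa using (Finset.sum_eq_zero_iff_of_nonneg fun i _ => mul_self_nonneg (x i)).mp sum_sq i
    (Finset.mem_univ i)

end StandardForm

/-- If `𝔥 ⊆ so(r,s)` is a subalgebra that is either (i) proper and irreducible,
or (ii) preserves a proper nondegenerate subspace, or (iii) the form is definite
and `𝔥` is an arbitrary proper subalgebra, then `(𝔥 ⊕ ℝ·id)^{(1)} = 0`. -/
theorem first_prolongation_zero (r s : ℕ)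
    (h : Set (Module.End ℝ (Fin (r + s) → ℝ)))
    (hsub : IsLieSub h) (hso : h ⊆ soSet (psForm r s))
    (hcond :
      (h ≠ soSet (psForm r s) ∧ Irred h) ∨
      (∃ W : Submodule ℝ (Fin (r + s) → ℝ), W ≠ ⊥ ∧ W ≠ ⊤ ∧
        IsNondegOn (psForm r s) W ∧ Invariant h W) ∨
      ((s = 0 ∨ r = 0) ∧ h ≠ soSet (psForm r s))) :
    firstProlong
        {F | ∃ c : ℝ, ∃ A ∈ h, F = c • (1 : Module.End ℝ (Fin (r + s) → ℝ)) + A}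
      = {0} :=
  first_prolongation_zero_general (psForm_isSymm r s) (psForm_nondegenerate r s)
    (𝔥 := hsub.toLieSubalgebra) hso <|
    hcond.imp_right <| Or.imp_right <| And.imp_left psForm_anisotropic_of_definite

end Weyl
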